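/- arXiv:1210.7708 — 2 statements merged into one kernel-verified Lean document; each statement's English description precedes it below -/
import Mathlib

section
/- Let n ≥ 2 and 1 ≤ k ≤ n-1, and let ω_{k-1} be the largest zero of T_n^{(k)}. Then for every x ∈ [0, ω_{k-1}], |T_n^{(k)}(x)| ≤ (1/(2k+1))·T_n^{(k)}(1). -/
open Polynomial Set

/-- `k`-th derivative of the Chebyshev polynomial `T_m`, evaluated at `x`. -/
noncomputable def chebDeriv (m : ℤ) (k : ℕ) (x : ℝ) : ℝ :=
  (derivative^[k] (Polynomial.Chebyshev.T ℝ m)).eval x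

/-- `σ_n = 2^(n-1) n! = T_n^{(n)}(1)`. -/
noncomputable def sigmaN (n : ℕ) : ℝ := 2 ^ (n - 1) * (n.factorial : ℝ)

/-- `f` is `n` times differentiable on the set `s`. -/
def NTimesDiffOn (n : ℕ) (f : ℝ → ℝ) (s : Set ℝ) : Prop :=
  ∀ i < n, DifferentiableOn ℝ (iteratedDerivWithin i f s) s

/-- The class `W^n_∞(σ)` on `[-1,1]`. -/
def memW (n : ℕ) (σ : ℝ) (f : ℝ → ℝ) : Prop :=
  NTimesDiffOn n f (Icc (-1:ℝ) 1) ∧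
  (∀ x ∈ Icc (-1:ℝ) 1, |f x| ≤ 1) ∧
  (∀ x ∈ Icc (-1:ℝ) 1, |iteratedDerivWithin n f (Icc (-1:ℝ) 1) x| ≤ σ)

/-- `m_k(x,σ) = sup { |f^{(k)}(x)| : f ∈ W^n_∞(σ) }`. -/
noncomputable def mval (n k : ℕ) (x σ : ℝ) : ℝ :=
  sSup {y | ∃ f : ℝ → ℝ, memW n σ f ∧
    y = |iteratedDerivWithin k f (Icc (-1:ℝ) 1) x|}

/-- `m_k^*(x,σ) = sup { |f^{(k)}(x)| : f ∈ W^n_∞(σ), f^{(k+1)}(x) = 0 }`. -/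
noncomputable def mstar (n k : ℕ) (x σ : ℝ) : ℝ :=
  sSup {y | ∃ f : ℝ → ℝ, memW n σ f ∧
    iteratedDerivWithin (k+1) f (Icc (-1:ℝ) 1) x = 0 ∧
    y = |iteratedDerivWithin k f (Icc (-1:ℝ) 1) x|}

/-- `μ_k(x₀)`: best constant in the pointwise Markov inequality. -/
noncomputable def muk (n k : ℕ) (x : ℝ) : ℝ :=
  sSup {y | ∃ p : Polynomial ℝ, p.natDegree ≤ n ∧
    (∀ t ∈ Icc (-1:ℝ) 1, |p.eval t| ≤ 1) ∧
    y = |(derivative^[k] p).eval x|}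

/-- `μ_k^*(x₀)`: best constant in the pointwise Schur-type inequality. -/
noncomputable def mukStar (n k : ℕ) (x : ℝ) : ℝ :=
  sSup {y | ∃ p : Polynomial ℝ, p.natDegree ≤ n ∧
    (∀ t ∈ Icc (-1:ℝ) 1, |p.eval t| ≤ 1) ∧
    (derivative^[k+1] p).eval x = 0 ∧
    y = |(derivative^[k] p).eval x|}

/-!
For `y = T_n^{(k)}`, a solution of the Gegenbauer equation
`(1 - x²) y'' = (2α + 1) x y' - N y` with `α = k` and `N = n² - k²`, let `z` be the largest critical
point in `[0, 1)`. The energy `N y² + (1 - x²) y'²` increases on `[0, 1]`, so `|y| ≤ |y z|` on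
`[0, z]`; on `[z, ω]` the function increases from `y z` to `0`. Hence everything reduces to
`(2α + 1) |y z| ≤ y 1`.

For this, `√Q - α y` with `Q = (α + 1)² y² + (2α + 1)(α + 1)/N · (1 - x²) y'²` takes the values
`(2α + 1) |y z|` at `z` and `y 1` at `1`, and it is increasing on `[z, 1]` because
`N y' ≤ 4 (α + 1) x y''` there, that is, `y' / x ^ (β + 1)` is increasing, where
`N = 4 (α + 1) (β + 1)`. That last inequality is a Sturm comparison with the solution of degree two,
for which `y'` is proportional to `x` and `β = 0`: the difference of its two sides, multiplied by
`x ^ β (1 - x²) ^ (α + 3/2)`, is decreasing on `[z, 1]` and vanishes at `1`.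
-/

lemma exists_eq_zero_and_pos_right {f : ℝ → ℝ} {a b : ℝ} (hf : ContinuousOn f (Icc a b))
    (hb : 0 < f b) {c : ℝ} (hc : c ∈ Icc a b) (hfc : f c ≤ 0) :
    ∃ z ∈ Ico a b, f z = 0 ∧ ∀ t ∈ Ioc z b, 0 < f t := by
  have hcompact : IsCompact (Icc a b ∩ f ⁻¹' Iic 0) :=
    isCompact_Icc.of_isClosed_subset (hf.preimage_isClosed_of_isClosed isClosed_Icc isClosed_Iic)
      inter_subset_left
  obtain ⟨z, ⟨hz, hfz⟩, hmax⟩ := hcompact.exists_isGreatest ⟨c, hc, hfc⟩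
  have hzb : z < b := hz.2.lt_of_ne fun h ↦ hb.not_ge (h ▸ hfz)
  have hpos : ∀ t ∈ Ioc z b, 0 < f t := fun t ht ↦ by
    by_contra! hft
    exact ht.1.not_ge (hmax ⟨⟨hz.1.trans ht.1.le, ht.2⟩, hft⟩)
  obtain ⟨t, ht, hft⟩ := intermediate_value_Icc hzb.le (hf.mono (Icc_subset_Icc_left hz.1))
    ⟨hfz, hb.le⟩
  have htz : t = z := ht.1.antisymm' (not_lt.1 fun h ↦ (hpos t ⟨h, ht.2⟩).ne' hft)
  exact ⟨z, ⟨hz.1, hzb⟩, htz ▸ hft, hpos⟩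

lemma hasDerivAt_rpow_mul_one_sub_sq_rpow (β p : ℝ) {x : ℝ} (hx : x ∈ Ioo 0 1) :
    HasDerivAt (fun t : ℝ ↦ t ^ β * (1 - t ^ 2) ^ p)
      (x ^ β * (1 - x ^ 2) ^ p * (β / x - 2 * p * x / (1 - x ^ 2))) x := by
  have hx0 : x ≠ 0 := hx.1.ne'
  have hw : 1 - x ^ 2 ≠ 0 := by nlinarith [hx.1, hx.2]
  have hw' : HasDerivAt (fun t : ℝ ↦ 1 - t ^ 2) (-(2 * x)) x := by
    simpa using (hasDerivAt_pow 2 x).const_sub 1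
  refine ((Real.hasDerivAt_rpow_const (Or.inl hx0)).mul (hw'.rpow_const (Or.inl hw))).congr_deriv ?_
  rw [Real.rpow_sub_one hx0, Real.rpow_sub_one hw]
  field_simp
  ring

/-- `y` solves the Gegenbauer (ultraspherical) equation with parameter `α` and eigenvalue `N` on
`s`. Its first two derivatives are carried as the functions `y'` and `y''`. The Gegenbauer
polynomial of degree `d` has eigenvalue `N = d (d + 2α)`. -/
structure IsGegenbauerSolutionOn (α N : ℝ) (y y' y'' : ℝ → ℝ) (s : Set ℝ) : Prop where
  hasDerivAt : ∀ x ∈ s, HasDerivAt y (y' x) x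
  hasDerivAt_deriv : ∀ x ∈ s, HasDerivAt y' (y'' x) x
  ode : ∀ x ∈ s, (1 - x ^ 2) * y'' x = (2 * α + 1) * x * y' x - N * y x

/-- The quantity `(1 - x²) (4 (α + 1) x y'' - N y')` measuring how far a solution of the Gegenbauer
equation is from the comparison solution of degree two. The equation is used to eliminate `y''`, so
that only two derivatives of `y` are needed to differentiate it. -/
def gegenbauerDefect (α N : ℝ) (y y' : ℝ → ℝ) (x : ℝ) : ℝ :=
  4 * (α + 1) * x * ((2 * α + 1) * x * y' x - N * y x) - N * (1 - x ^ 2) * y' x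

/-- The quadratic form `a y² + b (1 - x²) y'²`, a Lyapunov function for the Gegenbauer equation when
`a` and `b` are suitably chosen. -/
def gegenbauerEnergy (a b : ℝ) (y y' : ℝ → ℝ) (x : ℝ) : ℝ :=
  a * y x ^ 2 + b * (1 - x ^ 2) * y' x ^ 2

namespace IsGegenbauerSolutionOn

variable {α N : ℝ} {y y' y'' : ℝ → ℝ} {s t : Set ℝ}

lemma mono (h : IsGegenbauerSolutionOn α N y y' y'' s) (hts : t ⊆ s) :
    IsGegenbauerSolutionOn α N y y' y'' t :=
  ⟨fun x hx ↦ h.hasDerivAt x (hts hx), fun x hx ↦ h.hasDerivAt_deriv x (hts hx),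
    fun x hx ↦ h.ode x (hts hx)⟩

lemma continuousOn (h : IsGegenbauerSolutionOn α N y y' y'' s) : ContinuousOn y s :=
  HasDerivAt.continuousOn h.hasDerivAt

lemma continuousOn_deriv (h : IsGegenbauerSolutionOn α N y y' y'' s) : ContinuousOn y' s :=
  HasDerivAt.continuousOn h.hasDerivAt_deriv

lemma strictMonoOn_of_deriv_pos {a b : ℝ} (h : IsGegenbauerSolutionOn α N y y' y'' (Icc a b))
    (hpos : ∀ x ∈ Ioo a b, 0 < y' x) : StrictMonoOn y (Icc a b) :=
  strictMonoOn_of_hasDerivWithinAt_pos (convex_Icc a b) h.continuousOn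
    (fun x hx ↦ (h.hasDerivAt x (interior_subset hx)).hasDerivWithinAt)
    (by simpa only [interior_Icc] using hpos)

lemma gegenbauerDefect_eq (h : IsGegenbauerSolutionOn α N y y' y'' s) {x : ℝ} (hx : x ∈ s) :
    gegenbauerDefect α N y y' x = (1 - x ^ 2) * (4 * (α + 1) * x * y'' x - N * y' x) := by
  rw [gegenbauerDefect, ← h.ode x hx]
  ring

lemma hasDerivAt_gegenbauerDefect (h : IsGegenbauerSolutionOn α N y y' y'' s) {x : ℝ}
    (hx : x ∈ s) :
    HasDerivAt (gegenbauerDefect α N y y')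
      (4 * (α + 1) * ((2 * α + 1) * x * y' x - N * y x)
        + 4 * (α + 1) * x * ((2 * α + 1) * (y' x + x * y'' x) - N * y' x)
        - N * ((1 - x ^ 2) * y'' x - 2 * x * y' x)) x := by
  have hy := h.hasDerivAt x hx
  have hy' := h.hasDerivAt_deriv x hx
  have hid := hasDerivAt_id' x
  have hlin := ((hid.const_mul (2 * α + 1)).mul hy').sub (hy.const_mul N)
  have hw := (((hasDerivAt_pow 2 x).const_sub 1).const_mul N).mul hy'
  refine (((hid.const_mul (4 * (α + 1))).mul hlin).sub hw).congr_deriv ?_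
  simp only [Pi.mul_apply, Pi.sub_apply]
  push_cast
  ring

lemma hasDerivAt_weight_mul_gegenbauerDefect {β : ℝ}
    (h : IsGegenbauerSolutionOn α (4 * (α + 1) * (β + 1)) y y' y'' s) {x : ℝ} (hxs : x ∈ s)
    (hx : x ∈ Ioo 0 1) :
    HasDerivAt (fun t ↦ t ^ β * (1 - t ^ 2) ^ (α + 1 / 2)
        * gegenbauerDefect α (4 * (α + 1) * (β + 1)) y y' t)
      (-(4 * (α + 1) * β * (x ^ β * (1 - x ^ 2) ^ (α + 1 / 2))
        * ((2 * α + 1) * x ^ 2 + (β + 1) * (1 - x ^ 2)) * y' x / x)) x := by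
  have hx0 : x ≠ 0 := hx.1.ne'
  have hw : 1 - x ^ 2 ≠ 0 := by nlinarith [hx.1, hx.2]
  refine ((hasDerivAt_rpow_mul_one_sub_sq_rpow β (α + 1 / 2) hx).mul
    (h.hasDerivAt_gegenbauerDefect hxs)).congr_deriv ?_
  have hy'' : y'' x = ((2 * α + 1) * x * y' x - 4 * (α + 1) * (β + 1) * y x) / (1 - x ^ 2) := by
    rw [eq_div_iff hw, mul_comm, h.ode x hxs]
  rw [gegenbauerDefect, hy'']
  field_simp
  ring

lemma antitoneOn_weight_mul_gegenbauerDefect {β a : ℝ}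
    (h : IsGegenbauerSolutionOn α (4 * (α + 1) * (β + 1)) y y' y'' (Icc a 1)) (hα : -1 / 2 < α)
    (hβ : 0 ≤ β) (ha : 0 < a) (hpos : ∀ x ∈ Icc a 1, 0 ≤ y' x) :
    AntitoneOn (fun t ↦ t ^ β * (1 - t ^ 2) ^ (α + 1 / 2)
      * gegenbauerDefect α (4 * (α + 1) * (β + 1)) y y' t) (Icc a 1) := by
  have hweight : Continuous fun t : ℝ ↦ t ^ β * (1 - t ^ 2) ^ (α + 1 / 2) :=
    (continuous_id.rpow_const fun _ ↦ Or.inr hβ).mul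
      (Continuous.rpow_const (by fun_prop) fun _ ↦ Or.inr (by linarith))
  have hdefect := HasDerivAt.continuousOn fun x hx ↦ h.hasDerivAt_gegenbauerDefect (x := x) hx
  refine antitoneOn_of_hasDerivWithinAt_nonpos (convex_Icc a 1)
    (hweight.continuousOn.mul hdefect)
    (fun x hx ↦ (h.hasDerivAt_weight_mul_gegenbauerDefect (interior_subset hx)
      ?_).hasDerivWithinAt) fun x hx ↦ ?_ <;> rw [interior_Icc] at hx
  · exact ⟨ha.trans hx.1, hx.2⟩
  · have hx0 : 0 < x := ha.trans hx.1
    have hw : 0 < 1 - x ^ 2 := by nlinarith [hx.2]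
    have hy' : 0 ≤ y' x := hpos x ⟨hx.1.le, hx.2.le⟩
    have h2α : 0 < 2 * α + 1 := by linarith
    have hα1 : 0 < α + 1 := by linarith
    exact neg_nonpos.2 (by positivity)

lemma mul_deriv_le_mul_deriv_deriv {a : ℝ} (h : IsGegenbauerSolutionOn α N y y' y'' (Icc a 1))
    (hα : -1 / 2 < α) (hN : 4 * (α + 1) ≤ N) (ha : a ∈ Ioo 0 1)
    (hpos : ∀ x ∈ Icc a 1, 0 ≤ y' x) : N * y' a ≤ 4 * (α + 1) * a * y'' a := by
  obtain ⟨β, hβ, rfl⟩ : ∃ β, 0 ≤ β ∧ N = 4 * (α + 1) * (β + 1) := by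
    have hα1 : 0 < α + 1 := by linarith
    refine ⟨N / (4 * (α + 1)) - 1, ?_, by field_simp; ring⟩
    rwa [sub_nonneg, one_le_div (by positivity)]
  have ha1 : a ∈ Icc a 1 := left_mem_Icc.2 ha.2.le
  have hw : 0 < 1 - a ^ 2 := by nlinarith [ha.1, ha.2]
  have hanti := h.antitoneOn_weight_mul_gegenbauerDefect hα hβ ha.1 hpos ha1
    (right_mem_Icc.2 ha.2.le) ha.2.le
  simp only [one_pow, sub_self, Real.zero_rpow (by linarith : α + 1 / 2 ≠ 0), mul_zero,
    zero_mul] at hanti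
  have hweight : 0 < a ^ β * (1 - a ^ 2) ^ (α + 1 / 2) :=
    mul_pos (Real.rpow_pos_of_pos ha.1 _) (Real.rpow_pos_of_pos hw _)
  have hdefect := nonneg_of_mul_nonneg_right hanti hweight
  rw [h.gegenbauerDefect_eq ha1] at hdefect
  exact sub_nonneg.1 (nonneg_of_mul_nonneg_right hdefect hw)

lemma deriv_deriv_nonneg {a : ℝ} (h : IsGegenbauerSolutionOn α N y y' y'' (Icc a 1))
    (hα : -1 / 2 < α) (hN : 4 * (α + 1) ≤ N) (ha : a ∈ Ioo 0 1)
    (hpos : ∀ x ∈ Icc a 1, 0 ≤ y' x) : 0 ≤ y'' a := by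
  have hy' : 0 ≤ N * y' a := mul_nonneg (by linarith) (hpos a (left_mem_Icc.2 ha.2.le))
  have hα1 : 0 < 4 * (α + 1) * a := mul_pos (by linarith) ha.1
  exact nonneg_of_mul_nonneg_right
    (hy'.trans (h.mul_deriv_le_mul_deriv_deriv hα hN ha hpos)) hα1

lemma nonpos_of_deriv_eq_zero {z : ℝ} (h : IsGegenbauerSolutionOn α N y y' y'' (Icc z 1))
    (hα : -1 / 2 < α) (hN : 4 * (α + 1) ≤ N) (hz : z ∈ Ico 0 1) (hyz : y' z = 0)
    (hpos : ∀ x ∈ Ioc z 1, 0 < y' x) : y z ≤ 0 := by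
  have hle : ∀ x ∈ Ioo z 1, N * y x ≤ (2 * α + 1) * x * y' x := fun x hx ↦ by
    have hx0 : 0 < x := hz.1.trans_lt hx.1
    have hy'' := (h.mono (Icc_subset_Icc_left hx.1.le)).deriv_deriv_nonneg hα hN ⟨hx0, hx.2⟩
      fun t ht ↦ (hpos t ⟨hx.1.trans_le ht.1, ht.2⟩).le
    have hw : 0 < 1 - x ^ 2 := by nlinarith [hx.2]
    linarith [h.ode x (Ioo_subset_Icc_self hx), mul_nonneg hw.le hy'']
  have hzmem : z ∈ closure (Ioo z 1) := by
    rw [closure_Ioo hz.2.ne]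
    exact left_mem_Icc.2 hz.2.le
  have hz1 : z ∈ Icc z 1 := left_mem_Icc.2 hz.2.le
  have hNyz : N * y z ≤ (2 * α + 1) * z * y' z :=
    ContinuousWithinAt.closure_le hzmem
      (((h.continuousOn z hz1).mono Ioo_subset_Icc_self).const_mul N)
      ((by fun_prop : ContinuousWithinAt (fun x ↦ (2 * α + 1) * x) (Ioo z 1) z).mul
        ((h.continuousOn_deriv z hz1).mono Ioo_subset_Icc_self)) hle
  rw [hyz, mul_zero] at hNyz
  exact nonpos_of_mul_nonpos_right hNyz (by linarith)

lemma hasDerivAt_gegenbauerEnergy (h : IsGegenbauerSolutionOn α N y y' y'' s) (a b : ℝ) {x : ℝ}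
    (hx : x ∈ s) :
    HasDerivAt (gegenbauerEnergy a b y y')
      (2 * y' x * ((a - b * N) * y x + 2 * b * α * x * y' x)) x := by
  have hw := ((hasDerivAt_pow 2 x).const_sub 1).const_mul b
  refine ((((h.hasDerivAt x hx).pow 2).const_mul a).add
    (hw.mul ((h.hasDerivAt_deriv x hx).pow 2))).congr_deriv ?_
  simp only [Pi.pow_apply]
  push_cast
  linear_combination 2 * b * y' x * h.ode x hx

lemma abs_le_abs_of_deriv_eq_zero {x z : ℝ} (h : IsGegenbauerSolutionOn α N y y' y'' (Icc x z))
    (hα : 0 ≤ α) (hN : 0 < N) (hx : 0 ≤ x) (hxz : x ≤ z) (hz : z ≤ 1) (hyz : y' z = 0) :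
    |y x| ≤ |y z| := by
  have hmono : MonotoneOn (gegenbauerEnergy N 1 y y') (Icc x z) := by
    refine monotoneOn_of_hasDerivWithinAt_nonneg (convex_Icc x z)
      (HasDerivAt.continuousOn fun t ht ↦ h.hasDerivAt_gegenbauerEnergy N 1 ht)
      (fun t ht ↦ (h.hasDerivAt_gegenbauerEnergy N 1 (interior_subset ht)).hasDerivWithinAt)
      fun t ht ↦ ?_
    have ht0 : 0 ≤ t := hx.trans (interior_subset ht).1
    calc 0 ≤ 4 * α * t * y' t ^ 2 := by positivity
      _ = _ := by ring
  have henergy := hmono (left_mem_Icc.2 hxz) (right_mem_Icc.2 hxz) hxz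
  have hw : 0 ≤ (1 - x ^ 2) * y' x ^ 2 := mul_nonneg (by nlinarith) (sq_nonneg _)
  simp only [gegenbauerEnergy, hyz] at henergy
  exact sq_le_sq.1 (le_of_mul_le_mul_left (by linarith) hN)

lemma sqrt_gegenbauerEnergy_le {x : ℝ} (h : IsGegenbauerSolutionOn α N y y' y'' s) (hxs : x ∈ s)
    (hα : -1 / 2 < α) (hN : 0 < N) (hx : x ∈ Icc 0 1) (hy' : 0 ≤ y' x) (hy'' : 0 ≤ y'' x)
    (hle : N * y' x ≤ 4 * (α + 1) * x * y'' x) :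
    √(gegenbauerEnergy ((α + 1) ^ 2) ((2 * α + 1) * (α + 1) / N) y y' x)
      ≤ (α + 1) * (2 * (2 * α + 1) * x * y' x / N - y x) := by
  have hw : 0 ≤ 1 - x ^ 2 := by nlinarith [hx.1, hx.2]
  have hx0 : 0 ≤ x := hx.1
  have hα1 : 0 < α + 1 := by linarith
  have h2α : 0 < 2 * α + 1 := by linarith
  have hode := h.ode x hxs
  refine Real.sqrt_le_iff.2 ⟨mul_nonneg hα1.le ?_, ?_⟩
  · have hsplit : 2 * (2 * α + 1) * x * y' x / N - y x
        = ((1 - x ^ 2) * y'' x + (2 * α + 1) * x * y' x) / N := by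
      rw [hode]
      field_simp
      ring
    rw [hsplit]
    positivity
  · have hdiff : ((α + 1) * (2 * (2 * α + 1) * x * y' x / N - y x)) ^ 2
        - gegenbauerEnergy ((α + 1) ^ 2) ((2 * α + 1) * (α + 1) / N) y y' x
        = (α + 1) * (2 * α + 1) * y' x / N ^ 2
          * ((1 - x ^ 2) * (4 * (α + 1) * x * y'' x - N * y' x)) := by
      rw [← h.gegenbauerDefect_eq hxs, gegenbauerEnergy, gegenbauerDefect]
      field_simp
      ring
    exact sub_nonneg.1 (hdiff ▸ mul_nonneg (by positivity) (mul_nonneg hw (sub_nonneg.2 hle)))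

lemma hasDerivAt_sqrt_gegenbauerEnergy_sub {x : ℝ} (h : IsGegenbauerSolutionOn α N y y' y'' s)
    (hxs : x ∈ s) (hN : N ≠ 0)
    (hpos : 0 < gegenbauerEnergy ((α + 1) ^ 2) ((2 * α + 1) * (α + 1) / N) y y' x) :
    HasDerivAt
      (fun t ↦ √(gegenbauerEnergy ((α + 1) ^ 2) ((2 * α + 1) * (α + 1) / N) y y' t) - α * y t)
      (α * y' x / √(gegenbauerEnergy ((α + 1) ^ 2) ((2 * α + 1) * (α + 1) / N) y y' x)
        * ((α + 1) * (2 * (2 * α + 1) * x * y' x / N - y x)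
          - √(gegenbauerEnergy ((α + 1) ^ 2) ((2 * α + 1) * (α + 1) / N) y y' x))) x := by
  have hsqrt := Real.sqrt_pos.2 hpos
  refine (((h.hasDerivAt_gegenbauerEnergy _ _ hxs).sqrt hpos.ne').sub
    ((h.hasDerivAt x hxs).const_mul α)).congr_deriv ?_
  generalize √(gegenbauerEnergy ((α + 1) ^ 2) ((2 * α + 1) * (α + 1) / N) y y' x) = r at hsqrt ⊢
  field_simp
  ring

lemma monotoneOn_sqrt_gegenbauerEnergy_sub {z : ℝ}
    (h : IsGegenbauerSolutionOn α N y y' y'' (Icc z 1)) (hα : 0 ≤ α) (hN : 4 * (α + 1) ≤ N)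
    (hz : 0 ≤ z) (hpos : ∀ x ∈ Ioc z 1, 0 < y' x) :
    MonotoneOn (fun x ↦ √(gegenbauerEnergy ((α + 1) ^ 2) ((2 * α + 1) * (α + 1) / N) y y' x)
      - α * y x) (Icc z 1) := by
  have hN0 : 0 < N := by linarith
  have henergy : ∀ x ∈ Ioo z 1,
      0 < gegenbauerEnergy ((α + 1) ^ 2) ((2 * α + 1) * (α + 1) / N) y y' x := fun x hx ↦ by
    have hy' : 0 < y' x := hpos x (Ioo_subset_Ioc_self hx)
    have hw : 0 < 1 - x ^ 2 := by nlinarith [hz.trans_lt hx.1, hx.2]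
    unfold gegenbauerEnergy
    positivity
  refine monotoneOn_of_hasDerivWithinAt_nonneg (convex_Icc z 1)
    ((HasDerivAt.continuousOn fun x hx ↦ h.hasDerivAt_gegenbauerEnergy _ _ hx).sqrt.sub
      (h.continuousOn.const_mul α))
    (fun x hx ↦ (h.hasDerivAt_sqrt_gegenbauerEnergy_sub (interior_subset hx) hN0.ne'
      (henergy x (interior_Icc.subset hx))).hasDerivWithinAt) fun x hx ↦ ?_
  rw [interior_Icc] at hx
  have hx01 : x ∈ Ioo 0 1 := ⟨hz.trans_lt hx.1, hx.2⟩
  have hy' : 0 < y' x := hpos x (Ioo_subset_Ioc_self hx)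
  have hright := h.mono (Icc_subset_Icc_left hx.1.le)
  have hnonneg : ∀ t ∈ Icc x 1, 0 ≤ y' t := fun t ht ↦ (hpos t ⟨hx.1.trans_le ht.1, ht.2⟩).le
  have hle := h.sqrt_gegenbauerEnergy_le (Ioo_subset_Icc_self hx) (by linarith) hN0
    (Ioo_subset_Icc_self hx01) hy'.le (hright.deriv_deriv_nonneg (by linarith) hN hx01 hnonneg)
    (hright.mul_deriv_le_mul_deriv_deriv (by linarith) hN hx01 hnonneg)
  exact mul_nonneg (by positivity) (sub_nonneg.2 hle)

lemma mul_abs_le_of_deriv_eq_zero {z : ℝ} (h : IsGegenbauerSolutionOn α N y y' y'' (Icc z 1))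
    (hα : 0 ≤ α) (hN : 4 * (α + 1) ≤ N) (hz : z ∈ Ico 0 1) (hyz : y' z = 0)
    (hpos : ∀ x ∈ Ioc z 1, 0 < y' x) (hy1 : 0 ≤ y 1) : (2 * α + 1) * |y z| ≤ y 1 := by
  have hmono := h.monotoneOn_sqrt_gegenbauerEnergy_sub hα hN hz.1 hpos
    (left_mem_Icc.2 hz.2.le) (right_mem_Icc.2 hz.2.le) hz.2.le
  have hα1 : 0 ≤ α + 1 := by linarith
  have hy : y z ≤ 0 := h.nonpos_of_deriv_eq_zero (by linarith) hN hz hyz hpos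
  simp only [gegenbauerEnergy, hyz, one_pow, sub_self, mul_zero, zero_mul, add_zero,
    zero_pow two_ne_zero, ← mul_pow, Real.sqrt_sq_eq_abs, abs_mul, abs_of_nonneg hα1,
    abs_of_nonneg hy1, abs_of_nonpos hy] at hmono
  rw [abs_of_nonpos hy]
  linarith

theorem abs_le_div_of_mem_Icc_of_eq_zero (h : IsGegenbauerSolutionOn α N y y' y'' (Icc 0 1))
    (hα : 0 ≤ α) (hN : 4 * (α + 1) ≤ N) (hy1 : 0 < y 1) {c ω : ℝ} (hc : c ∈ Icc 0 1)
    (hyc : y' c ≤ 0) (hω1 : ω ≤ 1) (hω : y ω = 0) {x : ℝ} (hx : x ∈ Icc 0 ω) :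
    |y x| ≤ y 1 / (2 * α + 1) := by
  have hN0 : 0 < N := by linarith
  have hy'1 : 0 < y' 1 := by
    have hode := h.ode 1 (right_mem_Icc.2 zero_le_one)
    refine pos_of_mul_pos_right (a := 2 * α + 1) ?_ (by linarith)
    linarith [mul_pos hN0 hy1]
  obtain ⟨z, hz, hyz, hpos⟩ := exists_eq_zero_and_pos_right h.continuousOn_deriv hy'1 hc hyc
  have hright := h.mono (Icc_subset_Icc_left hz.1)
  have habs : |y x| ≤ |y z| := by
    rcases le_total x z with hxz | hzx
    · exact (h.mono (Icc_subset_Icc hx.1 hz.2.le)).abs_le_abs_of_deriv_eq_zero hα hN0 hx.1 hxz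
        hz.2.le hyz
    · have hmono := (hright.strictMonoOn_of_deriv_pos
        fun t ht ↦ hpos t (Ioo_subset_Ioc_self ht)).monotoneOn
      have hx1 : x ∈ Icc z 1 := ⟨hzx, hx.2.trans hω1⟩
      have hzy : y z ≤ y x := hmono (left_mem_Icc.2 hz.2.le) hx1 hzx
      have hyω : y x ≤ 0 := hω ▸ hmono hx1 ⟨hzx.trans hx.2, hω1⟩ hx.2
      exact abs_le_abs_of_nonpos hyω hzy
  have hbound := hright.mul_abs_le_of_deriv_eq_zero hα hN hz hyz hpos hy1.le
  rw [le_div_iff₀' (by positivity)]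
  exact (mul_le_mul_of_nonneg_left habs (by positivity)).trans hbound

end IsGegenbauerSolutionOn

lemma isGegenbauerSolutionOn_chebDeriv (m : ℤ) (k : ℕ) (s : Set ℝ) :
    IsGegenbauerSolutionOn k (m ^ 2 - k ^ 2) (chebDeriv m k) (chebDeriv m (k + 1))
      (chebDeriv m (k + 2)) s := by
  have hderiv (j : ℕ) (x : ℝ) : HasDerivAt (chebDeriv m j) (chebDeriv m (j + 1) x) x := by
    unfold chebDeriv
    rw [Function.iterate_succ_apply']
    exact Polynomial.hasDerivAt _ _
  exact ⟨fun x _ ↦ hderiv k x, fun x _ ↦ hderiv (k + 1) x,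
    fun x _ ↦ Chebyshev.one_sub_X_sq_mul_iterate_derivative_T_eval m k x⟩

lemma chebDeriv_one_pos {n k : ℕ} (hkn : k ≤ n) : 0 < chebDeriv n k 1 := by
  rw [chebDeriv, Chebyshev.iterate_derivative_T_eval_one_eq_div]
  push_cast
  refine div_pos (Finset.prod_pos fun j hj ↦ sub_pos.2 ?_) (Finset.prod_pos fun j _ ↦ by positivity)
  have hjn : j < n := (Finset.mem_range.1 hj).trans_le hkn
  gcongr

lemma chebDeriv_one_le_of_one_le (n k : ℕ) {x : ℝ} (hx : 1 ≤ x) :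
    chebDeriv n k 1 ≤ chebDeriv n k x := by
  have hspan := Chebyshev.T_iterate_derivative_mem_span_T (R := ℝ) n k
  unfold chebDeriv
  generalize derivative^[k] (Chebyshev.T ℝ n) = q at hspan ⊢
  induction hspan using Submodule.span_induction with
  | mem p hp =>
    obtain ⟨m, -, rfl⟩ := hp
    simpa only [Chebyshev.T_eval_one] using Chebyshev.one_le_eval_T_real m hx
  | zero => simp only [eval_zero, le_refl]
  | add p q _ _ hp hq => simpa only [eval_add] using add_le_add hp hq
  | smul c p _ hp => simpa only [eval_smul] using nsmul_le_nsmul_right hp c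

lemma chebDeriv_self_pos (n : ℕ) (x : ℝ) : 0 < chebDeriv n n x := by
  have hdeg : (derivative^[n] (Chebyshev.T ℝ n)).natDegree = 0 :=
    Nat.eq_zero_of_le_zero <| (natDegree_iterate_derivative _ n).trans (by simp)
  have hconst : chebDeriv n n x = chebDeriv n n 1 := by
    rw [chebDeriv, chebDeriv, eq_C_of_natDegree_eq_zero hdeg, eval_C, eval_C]
  exact hconst ▸ chebDeriv_one_pos le_rfl

lemma chebDeriv_eval_zero_of_odd {m : ℤ} {k : ℕ} (h : Odd (m + k)) : chebDeriv m k 0 = 0 := by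
  induction k using Nat.twoStepInduction with
  | zero => exact Chebyshev.T_eval_zero_of_odd ℝ (by simpa using h)
  | one =>
    have hU : (Chebyshev.U ℝ (m - 1)).eval 0 = 0 := Chebyshev.U_eval_zero_of_odd ℝ (by grind)
    simp only [chebDeriv, Function.iterate_one, Chebyshev.T_derivative_eq_U, eval_mul, hU, mul_zero]
  | more k ih _ =>
    have hk : chebDeriv m k 0 = 0 := ih (by grind)
    rw [chebDeriv] at hk ⊢
    rw [Chebyshev.iterate_derivative_T_eval_zero_recurrence, hk, mul_zero]

lemma eq_zero_of_chebDeriv_eq_zero_of_pos {m : ℤ} {k : ℕ}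
    (hpos : ∀ t ∈ Icc (0 : ℝ) 1, 0 < chebDeriv m (k + 1) t) {x : ℝ} (hx : x ∈ Icc 0 1)
    (hxk : chebDeriv m k x = 0) : x = 0 := by
  have h0 : (0 : ℝ) ∈ Icc 0 1 := left_mem_Icc.2 zero_le_one
  have hodd : Odd (m + k) := by
    by_contra heven
    exact (hpos 0 h0).ne' (chebDeriv_eval_zero_of_odd (by grind))
  have hmono := (isGegenbauerSolutionOn_chebDeriv m k (Icc 0 1)).strictMonoOn_of_deriv_pos
    fun t ht ↦ hpos t (Ioo_subset_Icc_self ht)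
  exact hmono.injOn hx h0 (hxk.trans (chebDeriv_eval_zero_of_odd hodd).symm)

/-- `|T_n^{(k)}(x)| ≤ (1/(2k+1))·T_n^{(k)}(1)` on `[0, ω_{k-1}]`, where
`ω_{k-1}` is the largest zero of `T_n^{(k)}`. -/
theorem cheb_kth_deriv_bound_on_interior (n k : ℕ) (hn : 2 ≤ n) (hk1 : 1 ≤ k)
    (hk2 : k ≤ n - 1) (ω : ℝ) (hω : IsGreatest {x : ℝ | chebDeriv n k x = 0} ω) :
    ∀ x ∈ Icc (0:ℝ) ω, |chebDeriv n k x| ≤ (1 / (2 * (k:ℝ) + 1)) * chebDeriv n k 1 := by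
  intro x hx
  have hω0 : chebDeriv n k ω = 0 := hω.1
  have hpos : 0 < chebDeriv n k 1 := chebDeriv_one_pos (by omega)
  have hω1 : ω ≤ 1 := not_lt.1 fun h ↦
    (hpos.trans_le (chebDeriv_one_le_of_one_le n k h.le)).ne' hω0
  rw [one_div_mul_eq_div]
  by_cases hcrit : ∃ c ∈ Icc (0 : ℝ) 1, chebDeriv n (k + 1) c ≤ 0
  · obtain ⟨c, hc, hcrit⟩ := hcrit
    have hkn : k + 2 ≤ n := by
      by_contra hkn
      obtain rfl : n = k + 1 := by omega
      exact hcrit.not_gt (chebDeriv_self_pos (k + 1) c)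
    have hN : 4 * ((k : ℝ) + 1) ≤ ((n : ℤ) : ℝ) ^ 2 - k ^ 2 := by
      have hkn' : (k : ℝ) + 2 ≤ n := by exact_mod_cast hkn
      push_cast
      nlinarith
    exact (isGegenbauerSolutionOn_chebDeriv n k (Icc 0 1)).abs_le_div_of_mem_Icc_of_eq_zero
      k.cast_nonneg hN hpos hc hcrit hω1 hω0 hx
  · push Not at hcrit
    have hω_eq : ω = 0 := eq_zero_of_chebDeriv_eq_zero_of_pos hcrit ⟨hx.1.trans hx.2, hω1⟩ hω0
    have hx_eq : x = ω := le_antisymm hx.2 (hω_eq ▸ hx.1)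
    rw [hx_eq, hω0, abs_zero]
    positivity
end

section
/- Let n ≥ 2 and 1 ≤ k ≤ n-1. Every real polynomial p of degree at most n with sup_{x∈[-1,1]}|p(x)| ≤ 1 and p^{(k+1)}(1) = 0 satisfies |p^{(k)}(1)| ≤ (1/(k+1))·T_n^{(k)}(1); equivalently μ_k^*(1) ≤ (1/(k+1))·T_n^{(k)}(1). -/
open Polynomial Set

/-!
Interpolate at the `n + 1` extremal points of `T_n` on `[-1, 1]`, and let `w = (X - 1) T_n'`, which
vanishes at all of them except `-1`. The linear functional
`q ↦ q^{(k)}(1) w^{(k+1)}(1) - q^{(k+1)}(1) w^{(k)}(1)` is nonnegative on the nodal polynomial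
omitting any one extremal point: omitting `-1` gives a multiple of `w`, hence `0`, and for the
others nonnegativity reduces to Laguerre's inequality `g g'' ≤ g'^2` for real-rooted `g`. As its
Lagrange coefficients therefore alternate in sign like the values of `T_n` at the extremal points,
`T_n` maximizes the functional among polynomials bounded by `1`. Since
`w^{(j)}(1) = j T_n^{(j)}(1)`, this reads
`(k + 1) p^{(k)} T_n^{(k+1)} - k p^{(k+1)} T_n^{(k)} ≤ T_n^{(k)} T_n^{(k+1)}` at `1`.
-/

open Polynomial.Chebyshev

section CommRing

variable {R : Type*} [CommRing R]

lemma iterate_derivative_X_sub_C_mul (a : R) (f : R[X]) (k : ℕ) :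
    derivative^[k] ((X - C a) * f) =
      (X - C a) * derivative^[k] f + k • derivative^[k - 1] f := by
  rw [sub_mul, iterate_derivative_sub, mul_comm X, iterate_derivative_mul_X,
    iterate_derivative_C_mul]
  ring

lemma eval_iterate_derivative_X_sub_C_mul_derivative (a : R) (f : R[X]) (k : ℕ) :
    (derivative^[k] ((X - C a) * derivative f)).eval a = k * (derivative^[k] f).eval a := by
  cases k <;> simp [iterate_derivative_X_sub_C_mul]

lemma wronskian_C_mul_right (c : R) (f g : R[X]) :
    wronskian f (C c * g) = C c * wronskian f g := by
  simp only [← smul_eq_C_mul, ← wronskianBilin_apply, map_smul]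

lemma wronskian_derivative_mul_self (f g : R[X]) :
    wronskian (derivative (f * g)) (f * g) =
      g ^ 2 * wronskian (derivative f) f + f ^ 2 * wronskian (derivative g) g := by
  simp only [wronskian, derivative_mul, derivative_add]
  ring

lemma wronskian_iterate_derivative_X_sub_C_mul (b c : R) (g : R[X]) (k : ℕ) :
    wronskian (derivative^[k] ((X - C b) * g)) (derivative^[k] ((X - C c) * g)) =
      C (c - b) * ((derivative^[k] g) ^ 2 +
        k • wronskian (derivative^[k] g) (derivative^[k - 1] g)) := by
  rw [iterate_derivative_X_sub_C_mul, iterate_derivative_X_sub_C_mul]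
  cases k with
  | zero =>
    simp only [wronskian, zero_smul, add_zero, derivative_mul, derivative_X_sub_C, C_sub]
    ring
  | succ k =>
    simp only [wronskian, Nat.add_sub_cancel, Function.iterate_succ_apply', derivative_add,
      derivative_mul, derivative_X_sub_C, derivative_natCast, nsmul_eq_mul, C_sub]
    ring

lemma eval_wronskian_iterate_derivative_X_sub_C_mul_derivative
    (a : R) (p f : R[X]) (k : ℕ) :
    (wronskian (derivative^[k] p) (derivative^[k] ((X - C a) * derivative f))).eval a =
      (k + 1) * (derivative^[k] p).eval a * (derivative^[k + 1] f).eval a -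
        k * (derivative^[k + 1] p).eval a * (derivative^[k] f).eval a := by
  simp only [wronskian, ← Function.iterate_succ_apply', eval_sub, eval_mul,
    eval_iterate_derivative_X_sub_C_mul_derivative]
  push_cast
  ring

end CommRing

lemma splits_derivative {f : ℝ[X]} (hf : f.Splits) : (derivative f).Splits := by
  rw [splits_iff_card_roots]
  refine le_antisymm (card_roots' _) ?_
  have := card_roots_le_derivative f
  have := hf.natDegree_eq_card_roots
  have := natDegree_derivative_le f
  omega

lemma splits_iterate_derivative {f : ℝ[X]} (hf : f.Splits) (k : ℕ) :
    (derivative^[k] f).Splits :=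
  Function.Iterate.rec _ hf (fun _ => splits_derivative) k

lemma eval_wronskian_derivative_self_nonneg {f : ℝ[X]} (hf : f.Splits) (x : ℝ) :
    0 ≤ (wronskian (derivative f) f).eval x := by
  induction hf using Submonoid.closure_induction with
  | mem f hf => obtain ⟨a, rfl⟩ | ⟨a, rfl⟩ := hf <;> simp [wronskian]
  | one => simp [wronskian]
  | mul f g _ _ hf hg =>
    rw [wronskian_derivative_mul_self, eval_add, eval_mul, eval_mul, eval_pow, eval_pow]
    positivity

lemma eval_wronskian_iterate_derivative_X_sub_C_mul_nonneg {g : ℝ[X]} (hg : g.Splits)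
    {b c : ℝ} (hbc : b ≤ c) (k : ℕ) (x : ℝ) :
    0 ≤ (wronskian (derivative^[k] ((X - C b) * g)) (derivative^[k] ((X - C c) * g))).eval x := by
  have laguerre : 0 ≤ (k • wronskian (derivative^[k] g) (derivative^[k - 1] g)).eval x := by
    cases k with
    | zero => simp
    | succ k =>
      rw [Nat.add_sub_cancel, Function.iterate_succ_apply', eval_smul]
      exact nsmul_nonneg
        (eval_wronskian_derivative_self_nonneg (splits_iterate_derivative hg k) x) _
  rw [wronskian_iterate_derivative_X_sub_C_mul, eval_mul, eval_C, eval_add, eval_pow]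
  exact mul_nonneg (sub_nonneg.2 hbc) (add_nonneg (sq_nonneg _) laguerre)

lemma splits_nodal {ι F : Type*} [Field F] (s : Finset ι) (v : ι → F) :
    (Lagrange.nodal s v).Splits :=
  Splits.prod fun i _ => Splits.X_sub_C (v i)

lemma apply_eq_sum_nodal_erase {ι F M : Type*} [Field F] [DecidableEq ι]
    [AddCommGroup M] [Module F M] (φ : F[X] →ₗ[F] M)
    {s : Finset ι} {v : ι → F} (hv : Set.InjOn v s) {p : F[X]} (hp : p.degree < s.card) :
    φ p = ∑ i ∈ s, (p.eval (v i) * (∏ j ∈ s.erase i, (v i - v j))⁻¹) •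
      φ (Lagrange.nodal (s.erase i) v) := by
  conv_lhs => rw [Lagrange.eq_interpolate hv hp, Lagrange.interpolate_eq_sum]
  simp only [← smul_eq_C_mul, map_sum, map_smul, div_eq_mul_inv, Lagrange.nodal_eq]

lemma apply_le_apply_T_of_nodal_erase_nonneg {n : ℕ} (φ : ℝ[X] →ₗ[ℝ] ℝ)
    (hφ : ∀ i ≤ n, 0 ≤ φ (Lagrange.nodal ((Finset.range (n + 1)).erase i) (node n)))
    {p : ℝ[X]} (hp : p.natDegree ≤ n) (hb : ∀ x ∈ Icc (-1 : ℝ) 1, |p.eval x| ≤ 1) :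
    φ p ≤ φ (T ℝ n) := by
  let c (i : ℕ) : ℝ := (∏ j ∈ (Finset.range (n + 1)).erase i, (node n i - node n j))⁻¹ *
    φ (Lagrange.nodal ((Finset.range (n + 1)).erase i) (node n))
  have apply_eq_sumNodes {q : ℝ[X]} (hq : q.natDegree ≤ n) : φ q = sumNodes n c q := by
    have hdeg : q.degree < (Finset.range (n + 1)).card := by
      rw [Finset.card_range]
      exact degree_lt_iff_coeff_zero _ _ |>.2 fun m hm =>
        coeff_eq_zero_of_natDegree_lt (by omega)
    rw [apply_eq_sum_nodal_erase φ (strictAntiOn_node n).injOn hdeg, sumNodes,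
      ← Nat.range_succ_eq_Iic]
    simp only [c, smul_eq_mul, mul_assoc]
  have alternating (i : ℕ) (hi : i ≤ n) : 0 ≤ (-1) ^ i * c i := by
    have weight_pos := inv_pos_of_pos (zero_lt_prod_node_sub_node hi)
    rw [mul_inv, ← inv_pow, inv_neg_one] at weight_pos
    rw [← mul_assoc]
    exact mul_nonneg weight_pos.le (hφ i hi)
  rw [apply_eq_sumNodes hp, apply_eq_sumNodes (by simp)]
  exact sumNodes_le_sumNodes_T alternating hb

lemma eval_wronskian_iterate_derivative_nodal_le {n : ℕ} (k : ℕ) (x : ℝ)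
    {p : ℝ[X]} (hp : p.natDegree ≤ n) (hb : ∀ x ∈ Icc (-1 : ℝ) 1, |p.eval x| ≤ 1) :
    (wronskian (derivative^[k] p)
        (derivative^[k] (Lagrange.nodal (Finset.range n) (node n)))).eval x ≤
      (wronskian (derivative^[k] (T ℝ n))
        (derivative^[k] (Lagrange.nodal (Finset.range n) (node n)))).eval x := by
  let w := Lagrange.nodal (Finset.range n) (node n)
  let φ : ℝ[X] →ₗ[ℝ] ℝ :=
    leval x ∘ₗ (wronskianBilin ℝ).flip (derivative^[k] w) ∘ₗ derivative ^ k
  have φ_apply (q : ℝ[X]) :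
      φ q = (wronskian (derivative^[k] q) (derivative^[k] w)).eval x := by
    simp [φ, Module.End.pow_apply]
  suffices nodal_erase_nonneg :
      ∀ i ≤ n, 0 ≤ φ (Lagrange.nodal ((Finset.range (n + 1)).erase i) (node n)) by
    simpa only [φ_apply] using apply_le_apply_T_of_nodal_erase_nonneg φ nodal_erase_nonneg hp hb
  intro i hi
  rw [φ_apply]
  obtain rfl | hi := hi.eq_or_lt
  · rw [Finset.range_add_one, Finset.erase_insert Finset.notMem_range_self,
      wronskian_self_eq_zero, eval_zero]
  · have erase_eq : Lagrange.nodal ((Finset.range (n + 1)).erase i) (node n) =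
        (X - C (node n n)) * Lagrange.nodal ((Finset.range n).erase i) (node n) := by
      rw [Finset.range_add_one, Finset.erase_insert_of_ne hi.ne', Lagrange.nodal_insert_eq_nodal
        (by simp)]
    have w_eq : w = (X - C (node n i)) * Lagrange.nodal ((Finset.range n).erase i) (node n) :=
      Lagrange.nodal_eq_mul_nodal_erase (Finset.mem_range.2 hi)
    rw [erase_eq, w_eq]
    exact eval_wronskian_iterate_derivative_X_sub_C_mul_nonneg (splits_nodal _ _)
      (node_lt le_rfl hi).le k x

lemma U_eq_nodal (n : ℕ) :
    U ℝ n = C (2 ^ n) * Lagrange.nodal (Finset.range n) fun i => node (n + 1) (i + 1) := by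
  have node_succ (i : ℕ) : node (n + 1) (i + 1) = Real.cos ((i + 1) * Real.pi / (n + 1)) := by
    simp [node]
  have node_inj : Set.InjOn (fun i => node (n + 1) (i + 1)) (Finset.range n) :=
    (strictAntiOn_node (n + 1)).injOn.comp (add_left_injective 1).injOn fun i hi => by
      rw [Finset.mem_coe, Finset.mem_range] at hi ⊢
      omega
  have hroots : (U ℝ n).roots = ((Finset.range n).image fun i => node (n + 1) (i + 1)).val := by
    simp only [roots_U_real, node_succ]
  have hcard : (U ℝ n).roots.card = (U ℝ n).natDegree := by
    rw [hroots, Finset.card_val, Finset.card_image_of_injOn node_inj, Finset.card_range,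
      natDegree_U_natCast]
  rw [← C_leadingCoeff_mul_prod_multiset_X_sub_C hcard, leadingCoeff_U_natCast, hroots,
    Lagrange.nodal_eq, ← Finset.prod_image (f := fun a => X - C a) node_inj]
  rfl

lemma X_sub_one_mul_derivative_T (n : ℕ) :
    (X - C 1) * derivative (T ℝ n) =
      C ((n : ℝ) * 2 ^ (n - 1)) * Lagrange.nodal (Finset.range n) (node n) := by
  cases n with
  | zero => simp
  | succ n =>
    have nodal_succ : Lagrange.nodal (Finset.range (n + 1)) (node (n + 1)) =
        (X - C 1) * Lagrange.nodal (Finset.range n) fun i => node (n + 1) (i + 1) := by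
      rw [Lagrange.nodal_eq, Finset.prod_range_succ', node_eq_one, mul_comm, Lagrange.nodal_eq]
    rw [nodal_succ, T_derivative_eq_U, Nat.cast_succ, add_sub_cancel_right, U_eq_nodal]
    simp only [map_one, Int.cast_natCast, Nat.cast_succ, Int.cast_add, Int.cast_one,
      add_tsub_cancel_right, map_mul, map_add, map_natCast]
    ring

lemma eval_one_iterate_derivative_T_pos {n k : ℕ} (hk : k ≤ n) :
    0 < (derivative^[k] (T ℝ n)).eval 1 := by
  rw [iterate_derivative_T_eval_one_eq_div]
  push_cast
  refine div_pos (Finset.prod_pos fun l hl => sub_pos.2 ?_) (by positivity)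
  have : l < n := (Finset.mem_range.1 hl).trans_le hk
  gcongr

section BoundedPolynomial

variable {n : ℕ} {p : ℝ[X]}

lemma iterate_derivative_eval_one_combination_le (hp : p.natDegree ≤ n)
    (hb : ∀ x ∈ Icc (-1 : ℝ) 1, |p.eval x| ≤ 1) (k : ℕ) :
    (k + 1) * (derivative^[k] p).eval 1 * (derivative^[k + 1] (T ℝ n)).eval 1 -
        k * (derivative^[k + 1] p).eval 1 * (derivative^[k] (T ℝ n)).eval 1 ≤
      (derivative^[k] (T ℝ n)).eval 1 * (derivative^[k + 1] (T ℝ n)).eval 1 := by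
  have hT : (k + 1) * (derivative^[k] (T ℝ n)).eval 1 * (derivative^[k + 1] (T ℝ n)).eval 1 -
        k * (derivative^[k + 1] (T ℝ n)).eval 1 * (derivative^[k] (T ℝ n)).eval 1 =
      (derivative^[k] (T ℝ n)).eval 1 * (derivative^[k + 1] (T ℝ n)).eval 1 := by ring
  rw [← hT]
  simp only [← eval_wronskian_iterate_derivative_X_sub_C_mul_derivative,
    X_sub_one_mul_derivative_T, iterate_derivative_C_mul, wronskian_C_mul_right, eval_mul, eval_C]
  gcongr
  exact eval_wronskian_iterate_derivative_nodal_le k 1 hp hb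

lemma iterate_derivative_eval_one_le_of_succ_eq_zero {k : ℕ} (hk : k < n) (hp : p.natDegree ≤ n)
    (hb : ∀ x ∈ Icc (-1 : ℝ) 1, |p.eval x| ≤ 1) (h0 : (derivative^[k + 1] p).eval 1 = 0) :
    (derivative^[k] p).eval 1 ≤ 1 / ((k : ℝ) + 1) * chebDeriv n k 1 := by
  have h := iterate_derivative_eval_one_combination_le hp hb k
  rw [h0, mul_zero, zero_mul, sub_zero] at h
  rw [one_div_mul_eq_div, le_div_iff₀' (by positivity)]
  exact le_of_mul_le_mul_right h (eval_one_iterate_derivative_T_pos hk)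

lemma abs_iterate_derivative_eval_one_le_of_succ_eq_zero {k : ℕ} (hk : k < n)
    (hp : p.natDegree ≤ n) (hb : ∀ x ∈ Icc (-1 : ℝ) 1, |p.eval x| ≤ 1)
    (h0 : (derivative^[k + 1] p).eval 1 = 0) :
    |(derivative^[k] p).eval 1| ≤ 1 / ((k : ℝ) + 1) * chebDeriv n k 1 := by
  refine abs_le'.2 ⟨iterate_derivative_eval_one_le_of_succ_eq_zero hk hp hb h0, ?_⟩
  simpa only [iterate_derivative_neg, eval_neg] using
    iterate_derivative_eval_one_le_of_succ_eq_zero (p := -p) hk (by rwa [natDegree_neg])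
      (by simpa only [eval_neg, abs_neg] using hb)
      (by rw [iterate_derivative_neg, eval_neg, h0, neg_zero])

end BoundedPolynomial

/-- generalized Schur inequality `μ_k^*(1) ≤ (1/(k+1))·T_n^{(k)}(1)`. -/
theorem schur_inequality_generalized (n k : ℕ) (hn : 2 ≤ n) (hk1 : 1 ≤ k) (hk2 : k ≤ n - 1) :
    (∀ p : Polynomial ℝ, p.natDegree ≤ n → (∀ x ∈ Icc (-1:ℝ) 1, |p.eval x| ≤ 1) →
      (derivative^[k+1] p).eval 1 = 0 →
      |(derivative^[k] p).eval 1| ≤ (1 / ((k:ℝ) + 1)) * chebDeriv n k 1) ∧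
    mukStar n k 1 ≤ (1 / ((k:ℝ) + 1)) * chebDeriv n k 1 := by
  have hk : k < n := by omega
  refine ⟨fun p => abs_iterate_derivative_eval_one_le_of_succ_eq_zero hk, csSup_le ?_ ?_⟩
  · exact ⟨_, 0, by simp, by simp, by simp, rfl⟩
  · rintro _ ⟨p, hp, hb, h0, rfl⟩
    exact abs_iterate_derivative_eval_one_le_of_succ_eq_zero hk hp hb h0
end
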